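/- arXiv:2204.00980 — 10 statements merged into one kernel-verified Lean document; each statement's English description precedes it below -/
import Mathlib

section
/- Let T > 0, γ > 1 and b₁, b₂ > 0 be real numbers, and let M : [0,T] → ℝ be a continuous nonnegative function satisfying M(t) ≤ b₁ + b₂·M(t)^γ for every t ∈ [0,T]. If M(0) ≤ b₁ and b₁·b₂^{1/(γ−1)} < (1 − 1/γ)·γ^{−1/(γ−1)}, then M(t) < b₁/(1 − 1/γ) for every t ∈ [0,T]. -/
/-!
Put `c = b₁ / (1 - 1/γ)`, so that `c - b₁ = c / γ`. The smallness condition says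
`c * b₂ ^ (1/(γ-1)) < γ ^ (-(1/(γ-1)))`; raising it to the power `γ - 1` gives
`b₂ * c ^ (γ-1) < 1/γ`, hence `b₁ + b₂ * c ^ γ < c` (`barrier_strict`). Thus the inequality assumed
for `M` fails at the value `c`, so `M` never takes it. Since `M 0 ≤ b₁ < c` and `M` is continuous,
the intermediate value theorem keeps `M` below `c`.
-/

/-- The value `b₁ / (1 - 1/γ)` is forbidden for `M`: it strictly violates
`x ≤ b₁ + b₂ * x ^ γ`. -/
theorem barrier_strict {γ b₁ b₂ : ℝ} (hγ : 1 < γ) (hb₁ : 0 < b₁) (hb₂ : 0 < b₂)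
    (hsmall : b₁ * b₂ ^ (1 / (γ - 1)) < (1 - 1 / γ) * γ ^ (-(1 / (γ - 1)))) :
    b₁ + b₂ * (b₁ / (1 - 1 / γ)) ^ γ < b₁ / (1 - 1 / γ) := by
  have hγ0 : 0 < γ := by linarith
  have hγ1 : 0 < γ - 1 := by linarith
  have hd : 0 < 1 - 1 / γ := by
    rw [sub_pos, div_lt_one hγ0]
    exact hγ
  obtain ⟨c, hc⟩ : ∃ c, c = b₁ / (1 - 1 / γ) := ⟨_, rfl⟩
  rw [← hc]
  have hc0 : 0 < c := hc ▸ div_pos hb₁ hd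
  have hb : b₁ = (1 - 1 / γ) * c := by rw [hc]; field_simp
  have h1 : c * b₂ ^ (1 / (γ - 1)) < γ ^ (-(1 / (γ - 1))) := by
    rw [hb, mul_assoc] at hsmall
    exact lt_of_mul_lt_mul_left hsmall hd.le
  have h2 := Real.rpow_lt_rpow (by positivity) h1 hγ1
  rw [Real.mul_rpow hc0.le (by positivity), ← Real.rpow_mul hb₂.le, ← Real.rpow_mul hγ0.le,
    neg_mul, one_div_mul_cancel hγ1.ne', Real.rpow_one, Real.rpow_neg_one] at h2
  have h3 : c ^ γ = c ^ (γ - 1) * c := by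
    rw [Real.rpow_sub_one hc0.ne', div_mul_cancel₀ _ hc0.ne']
  have h4 := mul_lt_mul_of_pos_right h2 hc0
  rw [h3, hb, one_div]
  linarith

/-- **Strauss' lemma** (cf. the paper, Lemma 2.3): if a continuous nonnegative
function `M` on `[0, T]` satisfies `M t ≤ b₁ + b₂ * (M t) ^ γ` with `γ > 1`,
`M 0 ≤ b₁` and `b₁ * b₂ ^ (1/(γ-1)) < (1 - 1/γ) * γ ^ (-(1/(γ-1)))`,
then `M t < b₁ / (1 - 1/γ)` on `[0, T]`. -/
theorem strauss_lemma (T γ b₁ b₂ : ℝ) (hT : 0 < T) (hγ : 1 < γ)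
    (hb₁ : 0 < b₁) (hb₂ : 0 < b₂) (M : ℝ → ℝ)
    (hMcont : ContinuousOn M (Set.Icc 0 T))
    (hMnonneg : ∀ t ∈ Set.Icc (0 : ℝ) T, 0 ≤ M t)
    (hMineq : ∀ t ∈ Set.Icc (0 : ℝ) T, M t ≤ b₁ + b₂ * (M t) ^ γ)
    (hM0 : M 0 ≤ b₁)
    (hsmall : b₁ * b₂ ^ (1 / (γ - 1)) < (1 - 1 / γ) * γ ^ (-(1 / (γ - 1)))) :
    ∀ t ∈ Set.Icc (0 : ℝ) T, M t < b₁ / (1 - 1 / γ) := by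
  have hbar := barrier_strict hγ hb₁ hb₂ hsmall
  have hd : 0 < 1 - 1 / γ := by
    rw [sub_pos, div_lt_one (by linarith)]
    exact hγ
  have hc0 : 0 < b₁ / (1 - 1 / γ) := div_pos hb₁ hd
  have hlt : b₁ < b₁ / (1 - 1 / γ) := by
    have : 0 ≤ b₂ * (b₁ / (1 - 1 / γ)) ^ γ := by positivity
    linarith
  intro t ht
  by_contra! hge
  have hsub : Set.Icc 0 t ⊆ Set.Icc 0 T := Set.Icc_subset_Icc_right ht.2
  obtain ⟨s, hs, hMs⟩ :=
    intermediate_value_Icc ht.1 (hMcont.mono hsub) ⟨hM0.trans hlt.le, hge⟩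
  have := hMineq s (hsub hs)
  rw [hMs] at this
  linarith
end

section
/- For every ξ ∈ ℝ³ and every λ ∈ ℂ, det(A(ξ) − λ·I₅) = −(λ + μ‖ξ‖²)²·g(λ, ‖ξ‖²), where I₅ is the 5×5 identity matrix. -/
/-!
The `3 × 3` block of `A(ξ) − λ I` is `d I₃ − (μ+μ') ξ ξᵀ` with `d = −(λ + μ‖ξ‖²)`, and the border
rows and columns are multiples of `ξ`. On the two-dimensional space orthogonal to `ξ` the matrix
therefore acts as the scalar `d`, which gives the factor `d²`. What remains is a tridiagonal `3 × 3`
determinant for the longitudinal direction, equal to `−g`. `det_bordered` records this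
factorization as an identity over any commutative ring, where it holds without normalizing `ξ`.
-/

noncomputable section

/-- `β(r) = κ r / C_v + 4 r / (C_v (r+1))`. -/
def betaFun (Cv κ r : ℝ) : ℝ := κ * r / Cv + 4 * r / (Cv * (r + 1))

/-- `ν(r) = (2μ + μ') r`. -/
def nuFun (μ μ' r : ℝ) : ℝ := (2 * μ + μ') * r

/-- The cubic `g(λ, r) = λ³ + (ν(r)+β(r)) λ² + (ν(r) β(r) + R² (1 + 1/C_v) r) λ + R² r β(r)`. -/
def gCubic (R Cv μ μ' κ : ℝ) (r : ℝ) (l : ℂ) : ℂ :=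
  l ^ 3 + ((nuFun μ μ' r + betaFun Cv κ r : ℝ) : ℂ) * l ^ 2
    + ((nuFun μ μ' r * betaFun Cv κ r + R ^ 2 * (1 + 1 / Cv) * r : ℝ) : ℂ) * l
    + ((R ^ 2 * r * betaFun Cv κ r : ℝ) : ℂ)

/-- The Fourier symbol `A(ξ)` of the linearized 3-D radiative hydrodynamics system,
written in block form with blocks of sizes 1, 3, 1:
`A(ξ) = [[0, −iRξᵀ, 0], [−iRξ, −μ‖ξ‖²I₃ − (μ+μ')ξξᵀ, −iRξ], [0, −i(R/C_v)ξᵀ, −β(‖ξ‖²)]]`. -/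
def Amat (R Cv μ μ' κ : ℝ) (ξ : EuclideanSpace ℝ (Fin 3)) : Matrix (Fin 5) (Fin 5) ℂ :=
  let I : ℂ := Complex.I
  let r : ℂ := ((‖ξ‖ ^ 2 : ℝ) : ℂ)
  let x : Fin 3 → ℂ := fun k => ((ξ k : ℝ) : ℂ)
  let b : ℂ := ((betaFun Cv κ (‖ξ‖ ^ 2) : ℝ) : ℂ)
  !![0, -I * R * x 0, -I * R * x 1, -I * R * x 2, 0;
     -I * R * x 0, -μ * r - (μ + μ') * (x 0 * x 0), -(μ + μ') * (x 0 * x 1),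
       -(μ + μ') * (x 0 * x 2), -I * R * x 0;
     -I * R * x 1, -(μ + μ') * (x 1 * x 0), -μ * r - (μ + μ') * (x 1 * x 1),
       -(μ + μ') * (x 1 * x 2), -I * R * x 1;
     -I * R * x 2, -(μ + μ') * (x 2 * x 0), -(μ + μ') * (x 2 * x 1),
       -μ * r - (μ + μ') * (x 2 * x 2), -I * R * x 2;
     0, -I * (R / Cv) * x 0, -I * (R / Cv) * x 1, -I * (R / Cv) * x 2, -b]

/-- Factorization into the transverse part `d ^ 2` and the longitudinal tridiagonal determinant
with diagonal `-l, d - m s, -c`, where `s = x² + y² + z²`. -/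
theorem det_bordered {A : Type*} [CommRing A] (l d m p q c x y z : A) :
    (!![-l, p * x, p * y, p * z, 0;
        p * x, d - m * (x * x), -m * (x * y), -m * (x * z), p * x;
        p * y, -m * (y * x), d - m * (y * y), -m * (y * z), p * y;
        p * z, -m * (z * x), -m * (z * y), d - m * (z * z), p * z;
        0, q * x, q * y, q * z, -c] : Matrix (Fin 5) (Fin 5) A).det
      = d ^ 2 * (l * (d - m * (x ^ 2 + y ^ 2 + z ^ 2)) * c
          + l * p * q * (x ^ 2 + y ^ 2 + z ^ 2) + p ^ 2 * (x ^ 2 + y ^ 2 + z ^ 2) * c) := by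
  simp [Matrix.det_succ_row_zero, Fin.sum_univ_succ, Fin.succAbove]
  ring

/-- `det(A(ξ) − λ I₅) = −(λ + μ‖ξ‖²)² g(λ, ‖ξ‖²)`. -/
theorem det_Amat_sub_smul_one (R Cv μ μ' κ : ℝ) (hR : 0 < R) (hCv : 0 < Cv)
    (hμ : 0 < μ) (hμ' : 0 < μ') (hκ : 0 ≤ κ)
    (ξ : EuclideanSpace ℝ (Fin 3)) (l : ℂ) :
    (Amat R Cv μ μ' κ ξ - l • (1 : Matrix (Fin 5) (Fin 5) ℂ)).det
      = -((l + (μ : ℂ) * ((‖ξ‖ ^ 2 : ℝ) : ℂ)) ^ 2 * gCubic R Cv μ μ' κ (‖ξ‖ ^ 2) l) := by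
  have hs : ((ξ 0 : ℝ) : ℂ) ^ 2 + ((ξ 1 : ℝ) : ℂ) ^ 2 + ((ξ 2 : ℝ) : ℂ) ^ 2
      = ((‖ξ‖ ^ 2 : ℝ) : ℂ) := by
    rw [EuclideanSpace.real_norm_sq_eq, Fin.sum_univ_three]
    push_cast
    rfl
  have key := det_bordered l (-(l + (μ : ℂ) * ((‖ξ‖ ^ 2 : ℝ) : ℂ))) ((μ : ℂ) + μ')
    (-Complex.I * R) (-Complex.I * (R / Cv)) (((betaFun Cv κ (‖ξ‖ ^ 2) : ℝ) : ℂ) + l)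
    ((ξ 0 : ℝ) : ℂ) ((ξ 1 : ℝ) : ℂ) ((ξ 2 : ℝ) : ℂ)
  rw [hs] at key
  refine Eq.trans (congrArg Matrix.det ?_) (key.trans ?_)
  · ext i j
    fin_cases i <;> fin_cases j <;> simp [Amat] <;> ring
  · simp only [gCubic, nuFun]
    push_cast
    linear_combination
      (l + (μ : ℂ) * (‖ξ‖ : ℂ) ^ 2) ^ 2 * (‖ξ‖ : ℂ) ^ 2 * (R : ℂ) ^ 2
        * (l / Cv + ((betaFun Cv κ (‖ξ‖ ^ 2) : ℝ) : ℂ) + l) * Complex.I_sq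

end
end

section
/- For every real r > 0, every complex root λ of the cubic g(·, r) (i.e., every λ ∈ ℂ with g(λ, r) = 0) has strictly negative real part. -/
/-!
The coefficients of the cubic are real and positive, so by the Routh-Hurwitz criterion
(`re_neg_of_cubic_eq_zero`) it is enough that the product of the two middle coefficients exceeds
the constant term. This holds because `(ν + β) (ν β + R² (1 + 1 / C_v) r)` contains the summand
`R² r β`, and all of its other summands are positive.

The criterion itself is elementary for a cubic. At a root `x + i y` with `x ≥ 0`, either `y = 0`,
which positivity of the coefficients excludes, or the imaginary part determines `y²` in terms
of `x`, and substituting this in the real part gives a sum of nonnegative terms and one positive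
term equal to zero.
-/

noncomputable section

/-- Cubic case of the Routh-Hurwitz criterion: if `a, b, c > 0` and `c < a * b`, the roots of
`l ^ 3 + a * l ^ 2 + b * l + c` lie in the open left half-plane. -/
theorem re_neg_of_cubic_eq_zero {a b c : ℝ} (ha : 0 < a) (hb : 0 < b) (hc : 0 < c)
    (hab : c < a * b) {l : ℂ} (h : l ^ 3 + (a : ℂ) * l ^ 2 + (b : ℂ) * l + (c : ℂ) = 0) :
    l.re < 0 := by
  by_contra! hx
  obtain ⟨x, y⟩ := l
  have hre := congrArg Complex.re h
  have him := congrArg Complex.im h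
  simp only [pow_succ, pow_zero, one_mul, Complex.add_re, Complex.add_im, Complex.mul_re,
    Complex.mul_im, Complex.ofReal_re, Complex.ofReal_im, Complex.zero_re,
    Complex.zero_im] at hre him hx
  have hy : y * (3 * x ^ 2 - y ^ 2 + 2 * a * x + b) = 0 := by linarith
  rcases mul_eq_zero.mp hy with rfl | hy
  · have : 0 < x ^ 3 + a * x ^ 2 + b * x + c := by positivity
    linarith
  -- Eliminating `y ^ 2` from the real part leaves a sum of nonnegative terms and `a * b - c > 0`.
  · have key : 8 * x ^ 3 + 8 * a * x ^ 2 + 2 * (a ^ 2 + b) * x + (a * b - c) = 0 := by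
      linear_combination -hre + (3 * x + a) * hy
    have : 0 ≤ 8 * x ^ 3 + 8 * a * x ^ 2 + 2 * (a ^ 2 + b) * x := by positivity
    linarith

/-- For every real `r > 0`, every complex root of the cubic `g(·, r)` has
strictly negative real part. -/
theorem gCubic_root_re_neg (R Cv μ μ' κ : ℝ) (hR : 0 < R) (hCv : 0 < Cv)
    (hμ : 0 < μ) (hμ' : 0 < μ') (hκ : 0 ≤ κ) (r : ℝ) (hr : 0 < r)
    (l : ℂ) (hl : gCubic R Cv μ μ' κ r l = 0) : l.re < 0 := by
  have hβ : 0 < betaFun Cv κ r := by unfold betaFun; positivity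
  have hν : 0 < nuFun μ μ' r := by unfold nuFun; positivity
  refine re_neg_of_cubic_eq_zero (by positivity) (by positivity) (by positivity) ?_ hl
  generalize betaFun Cv κ r = β at hβ ⊢
  generalize nuFun μ μ' r = ν at hν ⊢
  have hrest : 0 < (ν + β) * (ν * β) + ν * (R ^ 2 * (1 + 1 / Cv) * r)
      + β * (R ^ 2 * (1 / Cv) * r) := by positivity
  linear_combination hrest

end
end

section
/- For every pair of real numbers 0 < ε ≤ K there exists a constant C > 0 such that for every ξ ∈ ℝ³ with ε ≤ ‖ξ‖ ≤ K, every eigenvalue λ ∈ ℂ of the matrix A(ξ) satisfies Re λ ≤ −C. -/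
/-!
The quantity `|a|² + ‖u‖² + C_v |θ|²` symmetrizes the system: along an eigenvector `(a, u, θ)` of
`A(ξ)` for `λ` the hyperbolic terms are purely imaginary, so that
`Re λ (|a|² + ‖u‖² + C_v |θ|²) = -(μ ‖ξ‖² ‖u‖² + (μ + μ') |ξ · u|² + C_v β |θ|²)`.
If `Re λ ≥ 0` and `ξ ≠ 0`, then `u = 0` and `θ = 0`, and the momentum equation reduces to `ξ a = 0`,
so `a = 0`, which is impossible. Hence every eigenvalue has negative real part
(`re_neg_of_mem_spectrum_Amat`).

The gap is uniform by compactness: `A` is continuous in `ξ`, so its eigenvalues over the annulus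
`ε ≤ ‖ξ‖ ≤ K` are bounded (`exists_norm_le_of_mem_spectrum_Amat`), and the set of pairs `(ξ, λ)`
with `ξ` in the annulus and `det (λ - A(ξ)) = 0` is compact. The continuous function `Re λ` attains its maximum there
unless no such pair exists, in which case any `C` works.
-/

noncomputable section

/-- The energy identity for an eigenvector `(a, (u, v, w), t)` at `ξ = (x, y, z)`, written with
`m = μ + μ'`, `d = R / C_v` and an arbitrary real number `r` in place of `‖ξ‖²`. -/
lemma energy_identity (R Cv μ m d r b x y z : ℝ) (hd : Cv * d = R) (l a u v w t : ℂ)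
    (h0 : l * a = -Complex.I * R * (x * u + y * v + z * w))
    (h1 : l * u = -Complex.I * R * x * (a + t) - μ * r * u - m * x * (x * u + y * v + z * w))
    (h2 : l * v = -Complex.I * R * y * (a + t) - μ * r * v - m * y * (x * u + y * v + z * w))
    (h3 : l * w = -Complex.I * R * z * (a + t) - μ * r * w - m * z * (x * u + y * v + z * w))
    (h4 : l * t = -Complex.I * d * (x * u + y * v + z * w) - b * t) :
    l.re * (Complex.normSq a + (Complex.normSq u + Complex.normSq v + Complex.normSq w)
        + Cv * Complex.normSq t)
      + μ * r * (Complex.normSq u + Complex.normSq v + Complex.normSq w)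
      + m * Complex.normSq (x * u + y * v + z * w) + Cv * b * Complex.normSq t = 0 := by
  subst hd
  simp only [Complex.ext_iff, Complex.mul_re, Complex.mul_im, Complex.add_re, Complex.add_im,
    Complex.sub_re, Complex.sub_im, Complex.neg_re, Complex.neg_im, Complex.I_re, Complex.I_im,
    Complex.ofReal_re, Complex.ofReal_im] at h0 h1 h2 h3 h4
  simp only [Complex.normSq_apply, Complex.mul_re, Complex.mul_im, Complex.add_re, Complex.add_im,
    Complex.ofReal_re, Complex.ofReal_im]
  linear_combination a.re * h0.1 + a.im * h0.2 + u.re * h1.1 + u.im * h1.2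
    + v.re * h2.1 + v.im * h2.2 + w.re * h3.1 + w.im * h3.2 + Cv * (t.re * h4.1 + t.im * h4.2)

lemma betaFun_pos {Cv κ r : ℝ} (hCv : 0 < Cv) (hκ : 0 ≤ κ) (hr : 0 < r) : 0 < betaFun Cv κ r := by
  unfold betaFun; positivity

lemma mem_spectrum_iff_det_eq_zero (M : Matrix (Fin 5) (Fin 5) ℂ) (l : ℂ) :
    l ∈ spectrum ℂ M ↔ (l • (1 : Matrix (Fin 5) (Fin 5) ℂ) - M).det = 0 := by
  rw [spectrum.mem_iff, Algebra.algebraMap_eq_smul_one, Matrix.isUnit_iff_isUnit_det,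
    isUnit_iff_ne_zero, not_not]

lemma re_neg_of_mem_spectrum_Amat {R Cv μ μ' κ : ℝ} (hR : 0 < R) (hCv : 0 < Cv)
    (hμ : 0 < μ) (hμ' : 0 < μ') (hκ : 0 ≤ κ) {ξ : EuclideanSpace ℝ (Fin 3)} (hξ : ξ ≠ 0)
    {l : ℂ} (hl : l ∈ spectrum ℂ (Amat R Cv μ μ' κ ξ)) : l.re < 0 := by
  rw [mem_spectrum_iff_det_eq_zero] at hl
  obtain ⟨p, hp, hpl⟩ := Matrix.exists_mulVec_eq_zero_iff.mpr hl
  rw [Matrix.sub_mulVec, Matrix.smul_mulVec, Matrix.one_mulVec, sub_eq_zero] at hpl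
  have e0 := congrFun hpl 0
  have e1 := congrFun hpl 1
  have e2 := congrFun hpl 2
  have e3 := congrFun hpl 3
  have e4 := congrFun hpl 4
  simp [Amat, Matrix.mulVec, dotProduct, Fin.sum_univ_five] at e0 e1 e2 e3 e4
  have hr : 0 < ‖ξ‖ ^ 2 := by positivity
  have hb := betaFun_pos hCv hκ hr
  set r := ‖ξ‖ ^ 2
  have hE := energy_identity R Cv μ (μ + μ') (R / Cv) (‖ξ‖ ^ 2) (betaFun Cv κ (‖ξ‖ ^ 2))
    (ξ 0) (ξ 1) (ξ 2) (by field_simp) l (p 0) (p 1) (p 2) (p 3) (p 4)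
    (by linear_combination e0) (by push_cast; linear_combination e1)
    (by push_cast; linear_combination e2) (by push_cast; linear_combination e3)
    (by push_cast; linear_combination e4)
  by_contra! hre
  have n (c : ℂ) : 0 ≤ Complex.normSq c := Complex.normSq_nonneg c
  have n0 := n (p 0)
  have n1 := n (p 1)
  have n2 := n (p 2)
  have n3 := n (p 3)
  have n4 := n (p 4)
  have nd := n ((ξ 0) * p 1 + (ξ 1) * p 2 + (ξ 2) * p 3)
  have k1 : 0 ≤ l.re * (Complex.normSq (p 0)
      + (Complex.normSq (p 1) + Complex.normSq (p 2) + Complex.normSq (p 3))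
      + Cv * Complex.normSq (p 4)) := by positivity
  have k2 : 0 ≤ μ * r * (Complex.normSq (p 1) + Complex.normSq (p 2) + Complex.normSq (p 3)) := by
    positivity
  have k3 : 0 ≤ (μ + μ') * Complex.normSq ((ξ 0) * p 1 + (ξ 1) * p 2 + (ξ 2) * p 3) := by
    positivity
  have k4 : 0 ≤ Cv * betaFun Cv κ r * Complex.normSq (p 4) := by positivity
  have hu : Complex.normSq (p 1) + Complex.normSq (p 2) + Complex.normSq (p 3) = 0 :=
    (mul_eq_zero.mp (show μ * r * _ = 0 by linarith)).resolve_left (by positivity)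
  have z1 : p 1 = 0 := Complex.normSq_eq_zero.mp (by linarith)
  have z2 : p 2 = 0 := Complex.normSq_eq_zero.mp (by linarith)
  have z3 : p 3 = 0 := Complex.normSq_eq_zero.mp (by linarith)
  have z4 : p 4 = 0 := Complex.normSq_eq_zero.mp
    ((mul_eq_zero.mp (show Cv * betaFun Cv κ r * _ = 0 by linarith)).resolve_left (by positivity))
  have hRne := hR.ne'
  have z0 : p 0 = 0 := by
    by_contra h0
    apply hξ
    ext i
    fin_cases i
    · simpa [z1, z2, z3, z4, h0, hRne] using e1
    · simpa [z1, z2, z3, z4, h0, hRne] using e2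
    · simpa [z1, z2, z3, z4, h0, hRne] using e3
  apply hp
  ext i
  fin_cases i <;> simp [z0, z1, z2, z3, z4]

lemma continuous_Amat (R Cv μ μ' κ : ℝ) (hCv : 0 < Cv) : Continuous (Amat R Cv μ μ' κ) := by
  have hβ : Continuous fun ξ : EuclideanSpace ℝ (Fin 3) => betaFun Cv κ (‖ξ‖ ^ 2) := by
    unfold betaFun
    refine Continuous.add (by fun_prop) (Continuous.div (by fun_prop) (by fun_prop) ?_)
    intro ξ; positivity
  refine continuous_matrix fun i j => ?_
  fin_cases i <;> fin_cases j <;> simp [Amat] <;> fun_prop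

attribute [local instance] Matrix.linftyOpNormedRing Matrix.linftyOpNormedAlgebra in
/-- Boundedness holds because the operator norm of `A(ξ)`, which dominates the spectrum, is
continuous on the compact ball `‖ξ‖ ≤ K`. -/
lemma exists_norm_le_of_mem_spectrum_Amat (R Cv μ μ' κ : ℝ) (hCv : 0 < Cv) (K : ℝ) :
    ∃ M : ℝ, ∀ ξ : EuclideanSpace ℝ (Fin 3), ‖ξ‖ ≤ K →
      ∀ l ∈ spectrum ℂ (Amat R Cv μ μ' κ ξ), ‖l‖ ≤ M := by
  obtain ⟨M, hM⟩ :=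
    (isCompact_closedBall (0 : EuclideanSpace ℝ (Fin 3)) K).exists_bound_of_continuousOn
      (continuous_Amat R Cv μ μ' κ hCv).continuousOn
  exact ⟨M, fun ξ hξ l hl =>
    (spectrum.norm_le_norm_of_mem hl).trans (hM ξ (by simpa using hξ))⟩

/-- Spectral gap on the middle frequencies: for `0 < ε ≤ K` there is `C > 0` such
that every eigenvalue `λ` of `A(ξ)` with `ε ≤ ‖ξ‖ ≤ K` satisfies `Re λ ≤ −C`. -/
theorem spectrum_Amat_re_le_mid_freq (R Cv μ μ' κ : ℝ) (hR : 0 < R) (hCv : 0 < Cv)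
    (hμ : 0 < μ) (hμ' : 0 < μ') (hκ : 0 ≤ κ)
    (ε K : ℝ) (hε : 0 < ε) (hεK : ε ≤ K) :
    ∃ C > 0, ∀ ξ : EuclideanSpace ℝ (Fin 3), ε ≤ ‖ξ‖ → ‖ξ‖ ≤ K →
      ∀ l ∈ spectrum ℂ (Amat R Cv μ μ' κ ξ), l.re ≤ -C := by
  obtain ⟨M, hM⟩ := exists_norm_le_of_mem_spectrum_Amat R Cv μ μ' κ hCv K
  let S : Set (EuclideanSpace ℝ (Fin 3) × ℂ) :=
    {q | ε ≤ ‖q.1‖ ∧ ‖q.1‖ ≤ K ∧ q.2 ∈ spectrum ℂ (Amat R Cv μ μ' κ q.1)}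
  have hcl : IsClosed S := by
    have hA := continuous_Amat R Cv μ μ' κ hCv
    simp only [S, mem_spectrum_iff_det_eq_zero]
    have hn : Continuous fun q : EuclideanSpace ℝ (Fin 3) × ℂ => ‖q.1‖ := by fun_prop
    refine (isClosed_le continuous_const hn).inter
      ((isClosed_le hn continuous_const).inter (isClosed_eq ?_ continuous_const))
    exact Continuous.matrix_det (by fun_prop)
  have hcomp : IsCompact S := by
    refine ((isCompact_closedBall (0 : EuclideanSpace ℝ (Fin 3)) K).prod
      (isCompact_closedBall (0 : ℂ) M)).of_isClosed_subset hcl ?_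
    rintro ⟨ξ, l⟩ ⟨-, h2, h3⟩
    exact ⟨by simpa using h2, by simpa using hM ξ h2 l h3⟩
  rcases S.eq_empty_or_nonempty with he | hne
  · refine ⟨1, one_pos, fun ξ h1 h2 l hl => ?_⟩
    have : (ξ, l) ∈ S := ⟨h1, h2, hl⟩
    simp [he] at this
  · obtain ⟨⟨ξ₀, l₀⟩, ⟨h1, -, h3⟩, hmax⟩ := hcomp.exists_isMaxOn hne
      (Complex.continuous_re.comp continuous_snd).continuousOn
    have hneg : l₀.re < 0 := re_neg_of_mem_spectrum_Amat hR hCv hμ hμ' hκ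
      (norm_pos_iff.mp (hε.trans_le h1)) h3
    refine ⟨-l₀.re, by linarith, fun ξ h1 h2 l hl => ?_⟩
    have := hmax (show (ξ, l) ∈ S from ⟨h1, h2, hl⟩)
    simpa using this

end
end

section
/- There exist ε > 0 and C > 0 such that for every real r with 0 < r < ε, the cubic g(·, r) has a real root λ₁ satisfying |λ₁ + ((κ+4)/(C_v+1))·r| ≤ C·r². -/
/-!
With `β(r) = r b`, `ν(r) = r n` and `A = R² (1 + 1/C_v)`, the substitution `λ = -r x` gives
`g(λ, r) = r² f(x)`, where `f(x) = R² b - A x - r x (x - n) (x - b)`. Put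
`a = (κ+4)/(C_v+1)`. Since `R² b - A a = O(r)` and the cubic term carries a factor `r`,
`f(x) = -A (x - a) + O(r)` uniformly for `|x - a| ≤ 1` (`gCubic_scaled_bound`). Hence `f` changes
sign on `[a - C r, a + C r]` for `C` large, and the intermediate value theorem gives a root `x`
with `|x - a| ≤ C r`, that is, a root `λ = -r x` of the cubic with `|λ + a r| ≤ C r²`.
-/

noncomputable section

/-- The substitution `λ = -r x` turns `g(·, r)` into `r²` times a cubic that is a perturbation of
size `r` of an affine function. -/
lemma gCubic_neg_mul (R Cv μ μ' κ r x : ℝ) :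
    gCubic R Cv μ μ' κ r ((-(r * x) : ℝ) : ℂ) =
      ((r ^ 2 * (R ^ 2 * (κ / Cv + 4 / (Cv * (r + 1))) - R ^ 2 * (1 + 1 / Cv) * x
        - r * (x * (x - (2 * μ + μ')) * (x - (κ / Cv + 4 / (Cv * (r + 1)))))) : ℝ) : ℂ) := by
  unfold gCubic betaFun nuFun
  norm_cast
  ring

/-- Uniformly for `|x - a| ≤ 1`, the rescaled cubic differs from `-A (x - a)` by at most a
constant times `r`. -/
lemma gCubic_scaled_bound (R Cv n κ r x : ℝ) (hCv : 0 < Cv) (hn : 0 < n)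
    (hκ : 0 ≤ κ) (hr : 0 < r) (hx : |x - (κ + 4) / (Cv + 1)| ≤ 1) :
    |R ^ 2 * (κ / Cv + 4 / (Cv * (r + 1))) - R ^ 2 * (1 + 1 / Cv) * x
        - r * (x * (x - n) * (x - (κ / Cv + 4 / (Cv * (r + 1)))))
        + R ^ 2 * (1 + 1 / Cv) * (x - (κ + 4) / (Cv + 1))| ≤
      r * (((κ + 4) / (Cv + 1) + 1) * ((κ + 4) / (Cv + 1) + 1 + n)
        * ((κ + 4) / (Cv + 1) + 1 + (κ + 4) / Cv) + 4 * R ^ 2 / Cv) := by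
  set a := (κ + 4) / (Cv + 1) with ha
  have ha0 : 0 < a := by positivity
  have hb0 : 0 < κ / Cv + 4 / (Cv * (r + 1)) := by positivity
  have hb1 : κ / Cv + 4 / (Cv * (r + 1)) ≤ (κ + 4) / Cv := by
    rw [add_div]
    gcongr
    nlinarith
  have key : R ^ 2 * (κ / Cv + 4 / (Cv * (r + 1))) - R ^ 2 * (1 + 1 / Cv) * a
      = -(r * (4 * R ^ 2 / (Cv * (r + 1)))) := by
    rw [ha]
    field_simp
    ring
  set b := κ / Cv + 4 / (Cv * (r + 1)) with hb
  obtain ⟨hx1, hx2⟩ := abs_le.mp hx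
  have h1 : |x| ≤ a + 1 := abs_le.mpr ⟨by linarith, by linarith⟩
  have h2 : |x - n| ≤ a + 1 + n := abs_le.mpr ⟨by linarith, by linarith⟩
  have h3 : |x - b| ≤ a + 1 + (κ + 4) / Cv := abs_le.mpr ⟨by linarith, by linarith⟩
  have h4 : |x * (x - n) * (x - b)| ≤ (a + 1) * (a + 1 + n) * (a + 1 + (κ + 4) / Cv) := by
    rw [abs_mul, abs_mul]
    gcongr
  have h5 : |4 * R ^ 2 / (Cv * (r + 1))| ≤ 4 * R ^ 2 / Cv := by
    rw [abs_of_nonneg (by positivity)]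
    gcongr
    nlinarith
  have e : R ^ 2 * b - R ^ 2 * (1 + 1 / Cv) * x - r * (x * (x - n) * (x - b))
      + R ^ 2 * (1 + 1 / Cv) * (x - a)
      = -(r * (x * (x - n) * (x - b) + 4 * R ^ 2 / (Cv * (r + 1)))) := by
    linear_combination key
  rw [e, abs_neg, abs_mul, abs_of_pos hr]
  gcongr
  exact (abs_add_le _ _).trans (add_le_add h4 h5)

/-- Low-frequency expansion of the real root: there are `ε > 0` and `C > 0`
such that for `0 < r < ε` the cubic `g(·, r)` has a real root `λ₁` with
`|λ₁ + ((κ+4)/(C_v+1)) r| ≤ C r²`. -/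
theorem gCubic_real_root_low_freq (R Cv μ μ' κ : ℝ) (hR : 0 < R) (hCv : 0 < Cv)
    (hμ : 0 < μ) (hμ' : 0 < μ') (hκ : 0 ≤ κ) :
    ∃ ε > 0, ∃ C > 0, ∀ r : ℝ, 0 < r → r < ε →
      ∃ l₁ : ℝ, gCubic R Cv μ μ' κ r (l₁ : ℂ) = 0 ∧
        |l₁ + ((κ + 4) / (Cv + 1)) * r| ≤ C * r ^ 2 := by
  set a := (κ + 4) / (Cv + 1) with ha
  have ha0 : 0 < a := by positivity
  have hn : 0 < 2 * μ + μ' := by positivity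
  obtain ⟨A, hA⟩ : ∃ A, A = R ^ 2 * (1 + 1 / Cv) := ⟨_, rfl⟩
  have hA0 : 0 < A := by rw [hA]; positivity
  obtain ⟨K, hK⟩ : ∃ K, K = (a + 1) * (a + 1 + (2 * μ + μ')) * (a + 1 + (κ + 4) / Cv)
      + 4 * R ^ 2 / Cv := ⟨_, rfl⟩
  have hK0 : 0 < K := by rw [hK]; positivity
  -- `C = K / A` balances the slope `A` against the error `r K`; `r < A / K` keeps `C r ≤ 1`.
  refine ⟨A / K, by positivity, K / A, by positivity, fun r hr hrε => ?_⟩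
  have hd1 : K / A * r ≤ 1 := by
    rw [lt_div_iff₀ hK0] at hrε
    rw [div_mul_eq_mul_div, div_le_one hA0]
    linarith
  have hd0 : 0 < K / A * r := by positivity
  have hAd : A * (K / A * r) = r * K := by field_simp
  have hbd := fun x => gCubic_scaled_bound R Cv (2 * μ + μ') κ r x hCv hn hκ hr
  have hg := fun x => gCubic_neg_mul R Cv μ μ' κ r x
  rw [← ha, ← hA, ← hK] at hbd
  rw [← hA] at hg
  set b := κ / Cv + 4 / (Cv * (r + 1)) with hb
  set d := K / A * r with hd
  have hcont : ContinuousOn (fun x : ℝ => R ^ 2 * b - A * x - r * (x * (x - (2 * μ + μ')) * (x - b)))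
      (Set.Icc (a - d) (a + d)) := by fun_prop
  have hl := (abs_le.mp (hbd (a - d) (by rw [abs_le]; constructor <;> linarith))).1
  have hu := (abs_le.mp (hbd (a + d) (by rw [abs_le]; constructor <;> linarith))).2
  rw [sub_sub_cancel_left, mul_neg, hAd] at hl
  rw [add_sub_cancel_left, hAd] at hu
  obtain ⟨x, ⟨hx1, hx2⟩, hx0⟩ := intermediate_value_Icc' (by linarith) hcont
    (show (0 : ℝ) ∈ Set.Icc _ _ from ⟨by linarith, by linarith⟩)
  refine ⟨-(r * x), ?_, ?_⟩
  · rw [hg x]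
    simp only at hx0
    rw [hx0, mul_zero, Complex.ofReal_zero]
  · have e : -(r * x) + a * r = -(r * (x - a)) := by ring
    have e2 : K / A * r ^ 2 = r * d := by rw [hd]; ring
    rw [e, abs_neg, abs_mul, abs_of_pos hr, e2]
    gcongr
    exact abs_le.mpr ⟨by linarith, by linarith⟩


end
end

section
/- There exist ε > 0 and C > 0 such that for every real r with 0 < r < ε, the cubic g(·, r) has a complex root λ₂ with Im λ₂ > 0 (and hence its complex conjugate is also a root) satisfying |Re λ₂ + ((2μ+μ')/2 + (κ+4)/(2 C_v (C_v+1)))·r| ≤ C·r² and |Im λ₂ − R·√((C_v+1)/C_v)·√r| ≤ C·r^{3/2}. -/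
/-!
Write `ν = n r`, `β = b r`, `S = R²` and `A = R² (1 + 1/C_v)`. Substituting `λ = -r y` and dividing
by `-r²` turns the cubic equation into `A y - S b + r y (y - n) (y - b) = 0`, whose left side is
`-S b < 0` at `y = 0` and `(A - S) b > 0` at `y = b`. So there is a root `0 < y < b`
(`exists_real_root`), and the equation itself shows `A y = S b + O(r)`.

Dividing the cubic by `λ + r y` leaves `λ² + p λ + q` with `p = r (n + b - y)` and
`q = A r + r² (n - y) (b - y)`. For small `r` its discriminant is negative, and its roots are
`-p/2 ± i w` with `w² = q - p²/4 = A r + O(r²)` (`cubic_eval_eq_zero`). Inserting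
`y = S b / A + O(r)` and `b = (κ + 4)/C_v + O(r)` in `-p/2` gives the real part, and
`√(A r + O(r²)) = √(A r) + O(r^{3/2})` (`abs_sub_sqrt_le`) gives the imaginary part.
All error terms have explicit constants.
-/

noncomputable section

/-- The real root of the cubic, in the variable `y = -λ / r`, lies strictly between `0` and `b`. -/
theorem exists_real_root {A S n b r : ℝ} (hS : 0 < S) (hSA : S < A) (hb : 0 < b) :
    ∃ y, 0 < y ∧ y < b ∧ A * y - S * b + r * y * (y - n) * (y - b) = 0 := by
  have hc : ContinuousOn (fun y : ℝ => A * y - S * b + r * y * (y - n) * (y - b))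
      (Set.Icc 0 b) := by fun_prop
  have h := intermediate_value_Ioo hb.le hc
  have h0 : (0 : ℝ) ∈ Set.Ioo (A * 0 - S * b + r * 0 * (0 - n) * (0 - b))
      (A * b - S * b + r * b * (b - n) * (b - b)) := by
    constructor <;> nlinarith [mul_pos hS hb, mul_pos (sub_pos.2 hSA) hb]
  obtain ⟨y, hy, hy0⟩ := h h0
  exact ⟨y, hy.1, hy.2, hy0⟩

/-- Both signs of `w` are allowed, so this covers a root of the quadratic factor and its
conjugate. -/
theorem cubic_eval_eq_zero {A S n b r y w : ℝ}
    (hy : A * y - S * b + r * y * (y - n) * (y - b) = 0)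
    (hw : w ^ 2 = A * r + r ^ 2 * ((n - y) * (b - y) - (n + b - y) ^ 2 / 4))
    {l : ℂ} (hl : l = ((-(r * (n + b - y) / 2) : ℝ) : ℂ) + (w : ℂ) * Complex.I) :
    l ^ 3 + ((n * r + b * r : ℝ) : ℂ) * l ^ 2 + ((n * r * (b * r) + A * r : ℝ) : ℂ) * l
      + ((S * r * (b * r) : ℝ) : ℂ) = 0 := by
  have hy' : (A * y - S * b + r * y * (y - n) * (y - b) : ℂ) = 0 := by exact_mod_cast hy
  have hw' : (w ^ 2 : ℂ) = A * r + r ^ 2 * ((n - y) * (b - y) - (n + b - y) ^ 2 / 4) := by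
    exact_mod_cast hw
  have hq : l ^ 2 + r * (n + b - y) * l + (A * r + r ^ 2 * ((n - y) * (b - y)) : ℂ) = 0 := by
    rw [hl]
    push_cast
    linear_combination (w ^ 2 : ℂ) * Complex.I_sq - hw'
  push_cast
  linear_combination (l + r * y) * hq - r ^ 2 * hy'

theorem abs_sub_sqrt_le {a w K : ℝ} (ha : 0 < a) (hw : 0 ≤ w) (h : |w ^ 2 - a| ≤ K) :
    |w - √a| ≤ K / √a := by
  have hs := Real.sqrt_pos.2 ha
  have hsq := Real.sq_sqrt ha.le
  rw [le_div_iff₀ hs]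
  calc |w - √a| * √a ≤ |w - √a| * (w + √a) := by gcongr; linarith
    _ = |w ^ 2 - a| := by
      have hf : w ^ 2 - a = (w - √a) * (w + √a) := by linear_combination hsq
      rw [hf, abs_mul, abs_of_pos (by linarith : 0 < w + √a)]
    _ ≤ K := h

/-- Low-frequency expansion of the complex conjugate pair of roots. -/
theorem gCubic_complex_root_low_freq (R Cv μ μ' κ : ℝ) (hR : 0 < R) (hCv : 0 < Cv)
    (hμ : 0 < μ) (hμ' : 0 < μ') (hκ : 0 ≤ κ) :
    ∃ ε > 0, ∃ C > 0, ∀ r : ℝ, 0 < r → r < ε →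
      ∃ l₂ : ℂ, gCubic R Cv μ μ' κ r l₂ = 0 ∧ 0 < l₂.im ∧
        gCubic R Cv μ μ' κ r ((starRingEnd ℂ) l₂) = 0 ∧
        |l₂.re + ((2 * μ + μ') / 2 + (κ + 4) / (2 * Cv * (Cv + 1))) * r| ≤ C * r ^ 2 ∧
        |l₂.im - R * Real.sqrt ((Cv + 1) / Cv) * Real.sqrt r| ≤ C * r ^ ((3 : ℝ) / 2) := by
  set n := 2 * μ + μ' with hn
  set B := (κ + 4) / Cv with hB
  set A := R ^ 2 * (1 + 1 / Cv) with hA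
  have hn0 : 0 < n := by positivity
  have hB0 : 0 < B := by positivity
  have hS0 : 0 < R ^ 2 := by positivity
  have hSA : R ^ 2 < A := by
    have : 0 < R ^ 2 * (1 / Cv) := by positivity
    linarith
  have hA0 : 0 < A := hS0.trans hSA
  -- `K` bounds the coefficient of `r²` in `w²`; `D` bounds that of `r²` in the real part.
  set K := 2 * (n + B) ^ 2 with hK
  have hK0 : 0 < K := by positivity
  have hsA : 0 < √A := Real.sqrt_pos.2 hA0
  set D := 4 / Cv + B ^ 2 * (n + B) / A with hD
  have hD0 : 0 < D := by positivity
  refine ⟨A / K, by positivity, K / √A + D, by positivity, fun r hr hrε => ?_⟩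
  have hrK : r * K < A := (lt_div_iff₀ hK0).1 hrε
  set b := (κ + 4 / (r + 1)) / Cv with hb
  have hb0 : 0 < b := by positivity
  have hBb : B - b = 4 / Cv * (r / (r + 1)) := by
    rw [hB, hb]; field_simp; ring
  have hr1 : r / (r + 1) ≤ r := div_le_self hr.le (by linarith)
  have hBb0 : 0 ≤ B - b := by rw [hBb]; positivity
  have hBb1 : B - b ≤ 4 / Cv * r := by rw [hBb]; gcongr
  obtain ⟨y, hy0, hyb, hy⟩ := exists_real_root (n := n) (r := r) hS0 hSA hb0
  -- `w² = A r + r² E`; the bound `|E| ≤ K` keeps this positive for `r < A / K`.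
  set E := (n - y) * (b - y) - (n + b - y) ^ 2 / 4 with hE
  have hEK : |E| ≤ K := by
    have h1 : |(n - y) * (b - y)| ≤ (n + B) * (n + B) := by
      rw [abs_mul]
      gcongr <;> rw [abs_le] <;> constructor <;> linarith
    have h2 : (n + b - y) ^ 2 ≤ (n + B) ^ 2 := by gcongr <;> linarith
    have h3 := sq_nonneg (n + b - y)
    have h4 := sq_nonneg (n + B)
    rw [← sq, abs_le] at h1
    rw [abs_le]
    constructor <;> linarith [h1.1, h1.2]
  have hpos : 0 < A * r + r ^ 2 * E := by
    have h1 := (abs_le.1 hEK).1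
    have h2 := mul_pos hr (sub_pos.2 hrK)
    have h3 := mul_nonneg (sq_nonneg r) (by linarith : 0 ≤ E + K)
    linarith
  set w := √(A * r + r ^ 2 * E) with hw
  have hw0 : 0 < w := Real.sqrt_pos.2 hpos
  have hwsq : w ^ 2 = A * r + r ^ 2 * E := Real.sq_sqrt hpos.le
  have hg : ∀ l, gCubic R Cv μ μ' κ r l = l ^ 3 + ((n * r + b * r : ℝ) : ℂ) * l ^ 2
      + ((n * r * (b * r) + A * r : ℝ) : ℂ) * l + ((R ^ 2 * r * (b * r) : ℝ) : ℂ) := by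
    have hβ : betaFun Cv κ r = b * r := by
      rw [betaFun, hb]; field_simp
    intro l
    rw [gCubic, hβ, nuFun]
  refine ⟨⟨-(r * (n + b - y) / 2), w⟩, ?_, hw0, ?_, ?_, ?_⟩
  · rw [hg]
    exact cubic_eval_eq_zero hy hwsq (by apply Complex.ext <;> simp)
  · rw [hg]
    exact cubic_eval_eq_zero (w := -w) hy (by rw [neg_sq, hwsq])
      (by apply Complex.ext <;> simp)
  · -- `b - y = b / (C_v + 1) + (S b / A - y)`, with the last term given by the root equation.
    have hAy : b - y = b / (Cv + 1) + r * (y * (y - n) * (y - b) / A) := by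
      have hS : R ^ 2 = A * (Cv / (Cv + 1)) := by rw [hA]; field_simp
      rw [hS] at hy
      field_simp at hy ⊢
      linear_combination -hy
    have h1 : |y * (y - n) * (y - b) / A| ≤ B ^ 2 * (n + B) / A := by
      rw [abs_div, abs_of_pos hA0, sq]
      gcongr
      rw [abs_mul, abs_mul, mul_right_comm]
      gcongr <;> rw [abs_le] <;> constructor <;> linarith
    have h2 : (B - b) / (Cv + 1) ≤ 4 / Cv * r := (div_le_self hBb0 (by linarith)).trans hBb1
    have h3 : 0 ≤ (B - b) / (Cv + 1) := by positivity
    have hB' : (κ + 4) / (2 * Cv * (Cv + 1)) = B / (Cv + 1) / 2 := by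
      rw [hB]; field_simp
    set F := y * (y - n) * (y - b) / A
    have hre : -(r * (n + b - y) / 2) + (n / 2 + (κ + 4) / (2 * Cv * (Cv + 1))) * r
        = r / 2 * ((B - b) / (Cv + 1) - r * F) := by
      rw [hB']
      linear_combination (-r / 2) * hAy
    have h4 : |(B - b) / (Cv + 1) - r * F| ≤ D * r := by
      calc _ ≤ |(B - b) / (Cv + 1)| + |r * F| := abs_sub _ _
        _ ≤ 4 / Cv * r + r * (B ^ 2 * (n + B) / A) := by
          rw [abs_of_nonneg h3, abs_mul, abs_of_pos hr]
          gcongr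
        _ = D * r := by ring
    calc _ = r / 2 * |(B - b) / (Cv + 1) - r * F| := by
          rw [hre, abs_mul, abs_of_pos (by positivity : 0 < r / 2)]
      _ ≤ r * (D * r) := by gcongr; linarith
      _ = D * r ^ 2 := by ring
      _ ≤ (K / √A + D) * r ^ 2 := by
        gcongr
        have : 0 < K / √A := by positivity
        linarith
  · have hlead : R * √((Cv + 1) / Cv) * √r = √(A * r) := by
      have : A = R ^ 2 * ((Cv + 1) / Cv) := by rw [hA]; field_simp
      rw [this, Real.sqrt_mul (by positivity), Real.sqrt_mul hS0.le, Real.sqrt_sq hR.le]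
    have h32 : r ^ ((3 : ℝ) / 2) = r * √r := by
      rw [Real.sqrt_eq_rpow, ← Real.rpow_one_add' hr.le (by norm_num)]
      norm_num
    have h1 : |w ^ 2 - A * r| ≤ K * r ^ 2 := by
      rw [hwsq, add_sub_cancel_left, abs_mul, abs_of_nonneg (sq_nonneg r), mul_comm]
      gcongr
    have hsr : 0 < √r := Real.sqrt_pos.2 hr
    rw [hlead, h32]
    calc |w - √(A * r)| ≤ K * r ^ 2 / √(A * r) := abs_sub_sqrt_le (by positivity) hw0.le h1
      _ = K / √A * (r * √r) := by
        rw [Real.sqrt_mul hA0.le]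
        field_simp
        rw [Real.sq_sqrt hr.le]
      _ ≤ (K / √A + D) * (r * √r) := by gcongr; linarith

end
end

section
/- For every natural number k and all real constants c > 0 and ε > 0 there exists C > 0 such that for every real t ≥ 0, ∫_{{ξ ∈ ℝ³ : ‖ξ‖ ≤ ε}} ‖ξ‖^{2k} · exp(−2c‖ξ‖²t) dξ ≤ C·(1+t)^{−(k + 3/2)}. -/
open MeasureTheory

/-!
On the ball `‖ξ‖ ≤ ε` one has `-2c‖ξ‖²t ≤ 2cε² - 2c‖ξ‖²(1 + t)`, so for `s = √(1 + t)` the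
integrand is at most `exp (2cε²) * s ^ (-2k) * g (s • ξ)` with `g ξ = ‖ξ‖ ^ (2k) * exp (-2c‖ξ‖²)`.
The function `g` is nonnegative and integrable on all of `ℝ³`, and rescaling by `s` contributes
`s ^ (-3)`, which gives the rate `s ^ (-(2k + 3)) = (1 + t) ^ (-(k + 3/2))`, uniformly down to
`t = 0`.
-/

/-- Polar coordinates reduce this to the one-dimensional moments of a Gaussian. -/
lemma integrable_norm_pow_mul_gaussian (k : ℕ) (c : ℝ) (hc : 0 < c) :
    Integrable fun ξ : EuclideanSpace ℝ (Fin 3) =>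
      ‖ξ‖ ^ (2 * k) * Real.exp (-2 * c * ‖ξ‖ ^ 2) := by
  have h := (integrable_fun_norm_addHaar (volume : Measure (EuclideanSpace ℝ (Fin 3)))
    (f := fun r : ℝ => r ^ (2 * k) * Real.exp (-2 * c * r ^ 2))).2
  refine h ?_
  have h1 := integrable_rpow_mul_exp_neg_mul_sq (b := 2 * c) (by positivity)
    (s := ((2 + 2 * k : ℕ) : ℝ)) (by have : (0 : ℝ) ≤ ((2 + 2 * k : ℕ) : ℝ) := by positivity
                                     linarith)
  refine h1.integrableOn.congr_fun ?_ measurableSet_Ioi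
  intro r _
  simp only [Real.rpow_natCast, finrank_euclideanSpace_fin, smul_eq_mul]
  rw [pow_add]
  norm_num [mul_assoc]

/-- Low-frequency Gaussian integral estimate: for every `k : ℕ` and `c, ε > 0`
there is `C > 0` with
`∫_{‖ξ‖ ≤ ε} ‖ξ‖^{2k} exp(−2c‖ξ‖²t) dξ ≤ C (1+t)^{−(k+3/2)}` for all `t ≥ 0`. -/
theorem gaussian_ball_integral_decay (k : ℕ) (c ε : ℝ) (hc : 0 < c) (hε : 0 < ε) :
    ∃ C > 0, ∀ t : ℝ, 0 ≤ t →
      ∫ ξ in Metric.closedBall (0 : EuclideanSpace ℝ (Fin 3)) ε,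
          ‖ξ‖ ^ (2 * k) * Real.exp (-2 * c * ‖ξ‖ ^ 2 * t)
        ≤ C * (1 + t) ^ (-((k : ℝ) + 3 / 2)) := by
  set g : EuclideanSpace ℝ (Fin 3) → ℝ :=
    fun ξ => ‖ξ‖ ^ (2 * k) * Real.exp (-2 * c * ‖ξ‖ ^ 2) with hg
  have hgi : Integrable g := integrable_norm_pow_mul_gaussian k c hc
  have hg0 : ∀ ξ, 0 ≤ g ξ := fun ξ => by positivity
  have hI : 0 ≤ ∫ ξ, g ξ := integral_nonneg hg0
  -- Adding `1` makes the constant positive without computing the integral of `g`.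
  refine ⟨Real.exp (2 * c * ε ^ 2) * (∫ ξ, g ξ) + 1, by positivity, fun t ht => ?_⟩
  set s := √(1 + t) with hs
  have hs0 : 0 < s := Real.sqrt_pos.2 (by linarith)
  have hs2 : s ^ 2 = 1 + t := Real.sq_sqrt (by linarith)
  have hrate : (1 + t) ^ (-((k : ℝ) + 3 / 2)) = (s ^ (2 * k))⁻¹ * (s ^ 3)⁻¹ := by
    rw [← hs2, ← Real.rpow_natCast s 2, ← Real.rpow_mul hs0.le, ← mul_inv, ← pow_add,
      ← Real.rpow_natCast, ← Real.rpow_neg hs0.le]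
    congr 1
    push_cast
    ring
  have hGi : Integrable fun ξ => Real.exp (2 * c * ε ^ 2) * ((s ^ (2 * k))⁻¹ * g (s • ξ)) :=
    ((hgi.comp_smul hs0.ne').const_mul _).const_mul _
  have hle : ∀ ξ ∈ Metric.closedBall (0 : EuclideanSpace ℝ (Fin 3)) ε,
      ‖ξ‖ ^ (2 * k) * Real.exp (-2 * c * ‖ξ‖ ^ 2 * t)
        ≤ Real.exp (2 * c * ε ^ 2) * ((s ^ (2 * k))⁻¹ * g (s • ξ)) := by
    intro ξ hξ
    have hξ' : ‖ξ‖ ≤ ε := by simpa using hξ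
    have hsq : ‖ξ‖ ^ 2 ≤ ε ^ 2 := by gcongr
    have hgs : (s ^ (2 * k))⁻¹ * g (s • ξ)
        = ‖ξ‖ ^ (2 * k) * Real.exp (-2 * c * ((1 + t) * ‖ξ‖ ^ 2)) := by
      simp only [hg, norm_smul, Real.norm_of_nonneg hs0.le, mul_pow, ← hs2]
      field_simp
    rw [hgs, mul_left_comm, ← Real.exp_add]
    gcongr
    nlinarith [mul_le_mul_of_nonneg_left hsq hc.le]
  calc ∫ ξ in Metric.closedBall (0 : EuclideanSpace ℝ (Fin 3)) ε,
          ‖ξ‖ ^ (2 * k) * Real.exp (-2 * c * ‖ξ‖ ^ 2 * t)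
      ≤ ∫ ξ in Metric.closedBall (0 : EuclideanSpace ℝ (Fin 3)) ε,
          Real.exp (2 * c * ε ^ 2) * ((s ^ (2 * k))⁻¹ * g (s • ξ)) := by
        refine setIntegral_mono_on ?_ hGi.integrableOn measurableSet_closedBall hle
        exact (by fun_prop : Continuous fun ξ : EuclideanSpace ℝ (Fin 3) =>
          ‖ξ‖ ^ (2 * k) * Real.exp (-2 * c * ‖ξ‖ ^ 2 * t)).continuousOn.integrableOn_compact
          (isCompact_closedBall _ _)
    _ ≤ ∫ ξ, Real.exp (2 * c * ε ^ 2) * ((s ^ (2 * k))⁻¹ * g (s • ξ)) := by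
        refine setIntegral_le_integral hGi (Filter.Eventually.of_forall fun ξ => ?_)
        have := hg0 (s • ξ)
        simp only [Pi.zero_apply]
        positivity
    _ = (Real.exp (2 * c * ε ^ 2) * ∫ ξ, g ξ) * ((s ^ (2 * k))⁻¹ * (s ^ 3)⁻¹) := by
        rw [integral_const_mul, integral_const_mul,
          Measure.integral_comp_smul_of_nonneg volume g s (hR := hs0.le),
          finrank_euclideanSpace_fin, smul_eq_mul]
        ring
    _ ≤ (Real.exp (2 * c * ε ^ 2) * (∫ ξ, g ξ) + 1) * (1 + t) ^ (-((k : ℝ) + 3 / 2)) := by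
        rw [hrate]
        gcongr
        linarith
end

section
/- For every real α > 0 there exists a constant C > 0 with the following property: if K ≥ 0 and F : [0,∞) → ℝ is a nonnegative differentiable function satisfying F'(t) + F(t) ≤ K·(1+t)^{−α} for all t ≥ 0, then F(t) ≤ C·(F(0) + K)·(1+t)^{−α} for all t ≥ 0. -/
/-!
The decay rate is compared with an explicit supersolution. Put `s = 1 + 2α` and
`G t = A (s + t)^(-α)` with `A = 2 s^α (F 0 + K)`. The shift `s` makes the derivative term harmless:
`G' + G = A (s + t)^(-α) (1 - α / (s + t)) ≥ (A / 2) (s + t)^(-α)`, and `s + t ≤ s (1 + t)` then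
gives `G' + G ≥ K (1 + t)^(-α) ≥ F' + F`. Hence `exp t * (F t - G t)` is nonincreasing on `[0, ∞)`;
it is nonpositive at `0`, so `F ≤ G`, and `G t ≤ A (1 + t)^(-α)` because `s ≥ 1`.
-/

/-- Gronwall-type decay lemma: for every `α > 0` there is `C > 0` such that any
nonnegative differentiable function `F` on `[0,∞)` with
`F'(t) + F(t) ≤ K (1+t)^{−α}` satisfies `F(t) ≤ C (F(0) + K) (1+t)^{−α}`. -/
theorem gronwall_polynomial_decay (α : ℝ) (hα : 0 < α) :
    ∃ C > 0, ∀ K : ℝ, 0 ≤ K → ∀ F : ℝ → ℝ,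
      (∀ t : ℝ, 0 ≤ t → 0 ≤ F t) →
      (∀ t : ℝ, 0 ≤ t → DifferentiableAt ℝ F t) →
      (∀ t : ℝ, 0 ≤ t → deriv F t + F t ≤ K * (1 + t) ^ (-α)) →
      ∀ t : ℝ, 0 ≤ t → F t ≤ C * (F 0 + K) * (1 + t) ^ (-α) := by
  obtain ⟨s, hs⟩ : ∃ s : ℝ, s = 1 + 2 * α := ⟨_, rfl⟩
  have hs0 : 0 < s := by linarith
  have hsα : 0 < s ^ α := Real.rpow_pos_of_pos hs0 α
  have hcancel : s ^ α * s ^ (-α) = 1 := by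
    rw [← Real.rpow_add hs0]; simp
  refine ⟨2 * s ^ α, by positivity, fun K hK F hF hd hineq t ht => ?_⟩
  have hF0 := hF 0 le_rfl
  set A : ℝ := 2 * s ^ α * (F 0 + K) with hA
  have hA0 : 0 ≤ A := by positivity
  have hG : ∀ x : ℝ, 0 ≤ x → HasDerivAt (fun x : ℝ => A * (s + x) ^ (-α))
      (-(A * (s + x) ^ (-α) * (α / (s + x)))) x := by
    intro x hx
    have hp : 0 < s + x := by linarith
    have h := ((((hasDerivAt_id x).const_add s).rpow_const (p := -α)
      (Or.inl hp.ne')).const_mul A)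
    refine h.congr_deriv ?_
    simp only [id]
    rw [Real.rpow_sub_one hp.ne']
    ring
  have hsuper : ∀ x : ℝ, 0 ≤ x → K * (1 + x) ^ (-α) ≤
      -(A * (s + x) ^ (-α) * (α / (s + x))) + A * (s + x) ^ (-α) := by
    intro x hx
    have hp : 0 < s + x := by linarith
    have hhalf : α / (s + x) ≤ 1 / 2 := by
      rw [div_le_div_iff₀ hp two_pos]; linarith
    have hcmp : s ^ (-α) * (1 + x) ^ (-α) ≤ (s + x) ^ (-α) := by
      rw [← Real.mul_rpow hs0.le (by linarith)]
      exact Real.rpow_le_rpow_of_nonpos hp (by nlinarith) (by linarith)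
    have hx1 : 0 ≤ (1 + x) ^ (-α) := Real.rpow_nonneg (by linarith) _
    have hx2 : 0 ≤ (s + x) ^ (-α) := Real.rpow_nonneg hp.le _
    calc K * (1 + x) ^ (-α) ≤ (F 0 + K) * (1 + x) ^ (-α) := by gcongr; linarith
      _ = (F 0 + K) * (s ^ α * s ^ (-α)) * (1 + x) ^ (-α) := by rw [hcancel]; ring
      _ = A * (1 / 2) * (s ^ (-α) * (1 + x) ^ (-α)) := by rw [hA]; ring
      _ ≤ A * (1 / 2) * (s + x) ^ (-α) := by gcongr
      _ ≤ _ := by nlinarith [mul_le_mul_of_nonneg_left hhalf (mul_nonneg hA0 hx2)]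
  have hH : ∀ x : ℝ, 0 ≤ x → HasDerivAt
      (fun x : ℝ => Real.exp x * (F x - A * (s + x) ^ (-α)))
      (Real.exp x * (F x - A * (s + x) ^ (-α)) +
        Real.exp x * (deriv F x - -(A * (s + x) ^ (-α) * (α / (s + x))))) x :=
    fun x hx => (Real.hasDerivAt_exp x).mul ((hd x hx).hasDerivAt.sub (hG x hx))
  have hanti : AntitoneOn (fun x : ℝ => Real.exp x * (F x - A * (s + x) ^ (-α)))
      (Set.Ici 0) := by
    refine antitoneOn_of_deriv_nonpos (convex_Ici 0)
      (fun x hx => (hH x hx).continuousAt.continuousWithinAt)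
      (fun x hx => (hH x (interior_subset hx)).differentiableAt.differentiableWithinAt)
      (fun x hx => ?_)
    have hx0 : 0 ≤ x := interior_subset hx
    rw [(hH x hx0).deriv, ← mul_add]
    exact mul_nonpos_of_nonneg_of_nonpos (Real.exp_pos x).le
      (by linarith [hineq x hx0, hsuper x hx0])
  have hzero : F 0 - A * (s + 0) ^ (-α) ≤ 0 := by
    have : A * (s + 0) ^ (-α) = 2 * (F 0 + K) := by
      rw [hA, add_zero]
      linear_combination 2 * (F 0 + K) * hcancel
    linarith
  have hle : Real.exp t * (F t - A * (s + t) ^ (-α)) ≤ 0 := by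
    refine (hanti (Set.mem_Ici.2 le_rfl) (Set.mem_Ici.2 ht) ht).trans ?_
    simpa using hzero
  have hFG : F t ≤ A * (s + t) ^ (-α) := by
    have := nonpos_of_mul_nonpos_right hle (Real.exp_pos t)
    linarith
  refine hFG.trans (mul_le_mul_of_nonneg_left ?_ hA0)
  exact Real.rpow_le_rpow_of_nonpos (by linarith) (by linarith) (by linarith)
end

section
/- For all real constants σ₁ > 0, σ₂ > 0, σ₃ > 0 and ε > 0 there exist K ≥ 1 and C > 0 such that for every real t ≥ K, ∫_{{ζ ∈ ℝ³ : ‖ζ‖ ≤ ε√t}} ( e^{−σ₁‖ζ‖²} + e^{−σ₂‖ζ‖²}·cos(σ₃‖ζ‖√t) )² dζ ≥ C. -/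
/-!
The integrand is nonnegative and radial, so it suffices to bound its integral over the fixed
annulus `ε / 2 < ‖ζ‖ ≤ ε`, which lies in the ball once `t ≥ 1`. Wherever `cos ≥ 0` the square is at
least `e^{-2σ₁ε²}`, and since `c + c² ≤ 0` for `c ∈ [-1, 0]`, it is everywhere at least
`e^{-2σ₁ε²} (c + c²) / 2` with `c` the cosine (`sq_add_mul_ge`). In polar coordinates the weight
`y²` is at least `ε² / 4`, and the mean of `c + c²` over long times is `1 / 2`, with an error
`O(1 / √t)` (`integral_cos_add_cos_sq_ge`).
-/

open MeasureTheory

lemma sq_add_mul_ge {m a b c : ℝ} (hm : 0 ≤ m) (hma : m ≤ a) (hb : 0 ≤ b)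
    (hc : -1 ≤ c) (hc' : c ≤ 1) : m ^ 2 / 2 * (c + c ^ 2) ≤ (a + b * c) ^ 2 := by
  rcases le_total 0 c with h | h
  · have h1 : m ≤ a + b * c := by nlinarith [mul_nonneg hb h]
    have h2 : c + c ^ 2 ≤ 2 := by nlinarith
    nlinarith [mul_le_mul_of_nonneg_left h2 (sq_nonneg m), pow_le_pow_left₀ hm h1 2]
  · have h2 : c + c ^ 2 ≤ 0 := by nlinarith
    nlinarith [mul_nonneg_of_nonpos_of_nonpos (neg_nonpos.2 (sq_nonneg m)) h2,
      sq_nonneg (a + b * c)]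

lemma integral_cos_add_cos_sq_ge {l : ℝ} (hl : 0 < l) (a b : ℝ) :
    (b - a) / 2 - 5 / (2 * l) ≤
      ∫ y in a..b, (Real.cos (l * y) + Real.cos (l * y) ^ 2) := by
  have key : ∀ y : ℝ, HasDerivAt
      (fun y => Real.sin (l * y) / l + y / 2 + Real.sin (2 * (l * y)) / (4 * l))
      (Real.cos (l * y) + Real.cos (l * y) ^ 2) y := by
    intro y
    have h0 : HasDerivAt (fun y : ℝ => l * y) (l * 1) y := (hasDerivAt_id y).const_mul l
    have h := ((h0.sin.div_const l).add ((hasDerivAt_id y).div_const 2)).add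
      ((h0.const_mul 2).sin.div_const (4 * l))
    refine h.congr_deriv ?_
    rw [Real.cos_two_mul]
    field_simp
    ring
  rw [intervalIntegral.integral_eq_sub_of_hasDerivAt (fun y _ => key y)
    (Continuous.intervalIntegrable (by fun_prop) _ _)]
  have e : Real.sin (l * b) / l + b / 2 + Real.sin (2 * (l * b)) / (4 * l)
      - (Real.sin (l * a) / l + a / 2 + Real.sin (2 * (l * a)) / (4 * l))
      - ((b - a) / 2 - 5 / (2 * l))
      = (4 * Real.sin (l * b) + Real.sin (2 * (l * b)) - 4 * Real.sin (l * a)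
        - Real.sin (2 * (l * a)) + 10) / (4 * l) := by
    field_simp
    ring
  have : 0 ≤ (4 * Real.sin (l * b) + Real.sin (2 * (l * b)) - 4 * Real.sin (l * a)
        - Real.sin (2 * (l * a)) + 10) / (4 * l) := by
    apply div_nonneg _ (by positivity)
    linarith [Real.neg_one_le_sin (l * b), Real.neg_one_le_sin (2 * (l * b)),
      Real.sin_le_one (l * a), Real.sin_le_one (2 * (l * a))]
  linarith

/-- Integration in polar coordinates over an annulus in `ℝ³`. -/
lemma integral_annulus (f : ℝ → ℝ) {r R : ℝ} (hr : 0 ≤ r) :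
    ∫ ζ in {ζ : EuclideanSpace ℝ (Fin 3) | ‖ζ‖ ∈ Set.Ioc r R}, f ‖ζ‖ =
      3 * volume.real (Metric.ball (0 : EuclideanSpace ℝ (Fin 3)) 1) *
        ∫ y in Set.Ioc r R, y ^ 2 * f y := by
  have hA : MeasurableSet {ζ : EuclideanSpace ℝ (Fin 3) | ‖ζ‖ ∈ Set.Ioc r R} :=
    measurable_norm measurableSet_Ioc
  have hsub : Set.Ioc r R ⊆ Set.Ioi 0 := fun y hy => hr.trans_lt hy.1
  have h := integral_fun_norm_addHaar (volume : Measure (EuclideanSpace ℝ (Fin 3)))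
    ((Set.Ioc r R).indicator f)
  rw [← integral_indicator hA]
  refine Eq.trans ?_ (h.trans ?_)
  · rfl
  · simp only [finrank_euclideanSpace, Fintype.card_fin, smul_eq_mul, nsmul_eq_mul]
    rw [show (fun y : ℝ => y ^ (3 - 1) * (Set.Ioc r R).indicator f y)
        = (Set.Ioc r R).indicator (fun y => y ^ 2 * f y) from by
      funext y
      by_cases hy : y ∈ Set.Ioc r R <;> simp [hy],
      setIntegral_indicator measurableSet_Ioc, Set.inter_eq_right.2 hsub]
    push_cast
    ring

/-- Lower bound on the oscillatory Gaussian integral appearing in the proof of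
the lower decay estimate: for all `σ₁, σ₂, σ₃, ε > 0` there are `K ≥ 1` and
`C > 0` such that for every `t ≥ K`,
`∫_{‖ζ‖ ≤ ε√t} (e^{−σ₁‖ζ‖²} + e^{−σ₂‖ζ‖²} cos(σ₃‖ζ‖√t))² dζ ≥ C`. -/
theorem oscillatory_gaussian_lower_bound (σ₁ σ₂ σ₃ ε : ℝ)
    (h₁ : 0 < σ₁) (h₂ : 0 < σ₂) (h₃ : 0 < σ₃) (hε : 0 < ε) :
    ∃ K : ℝ, 1 ≤ K ∧ ∃ C > 0, ∀ t : ℝ, K ≤ t →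
      C ≤ ∫ ζ in Metric.closedBall (0 : EuclideanSpace ℝ (Fin 3)) (ε * Real.sqrt t),
            (Real.exp (-σ₁ * ‖ζ‖ ^ 2)
              + Real.exp (-σ₂ * ‖ζ‖ ^ 2) * Real.cos (σ₃ * ‖ζ‖ * Real.sqrt t)) ^ 2 := by
  set V := volume.real (Metric.ball (0 : EuclideanSpace ℝ (Fin 3)) 1) with hV
  have hVpos : 0 < V :=
    ENNReal.toReal_pos (Metric.measure_ball_pos _ _ one_pos).ne' measure_ball_lt_top.ne
  set m := Real.exp (-σ₁ * ε ^ 2) with hm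
  have hmpos : 0 < m := Real.exp_pos _
  -- The threshold makes the frequency `σ₃ √t` at least `20 / ε`, so that the boundary terms
  -- cost at most half of the mean value.
  refine ⟨max 1 ((20 / (ε * σ₃)) ^ 2), le_max_left _ _,
    3 * V * ((ε / 2) ^ 2 * (m ^ 2 / 2) * (ε / 8)), by positivity, fun t ht => ?_⟩
  have ht1 : 1 ≤ Real.sqrt t := Real.one_le_sqrt.2 ((le_max_left _ _).trans ht)
  have ht2 : 20 / (ε * σ₃) ≤ Real.sqrt t := Real.le_sqrt_of_sq_le ((le_max_right _ _).trans ht)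
  set s := Real.sqrt t with hs
  have hl : 0 < σ₃ * s := by positivity
  let f : ℝ → ℝ := fun y =>
    (Real.exp (-σ₁ * y ^ 2) + Real.exp (-σ₂ * y ^ 2) * Real.cos (σ₃ * y * s)) ^ 2
  have hf : Continuous f := by fun_prop
  change _ ≤ ∫ ζ in Metric.closedBall (0 : EuclideanSpace ℝ (Fin 3)) (ε * s), f ‖ζ‖
  have hsub : {ζ : EuclideanSpace ℝ (Fin 3) | ‖ζ‖ ∈ Set.Ioc (ε / 2) ε}
      ⊆ Metric.closedBall (0 : EuclideanSpace ℝ (Fin 3)) (ε * s) := by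
    intro ζ hζ
    rw [mem_closedBall_zero_iff]
    nlinarith [hζ.2]
  have hint : IntegrableOn (fun ζ : EuclideanSpace ℝ (Fin 3) => f ‖ζ‖)
      (Metric.closedBall 0 (ε * s)) :=
    (hf.comp continuous_norm).continuousOn.integrableOn_compact (isCompact_closedBall _ _)
  refine le_trans ?_ (setIntegral_mono_set hint
    (Filter.Eventually.of_forall fun ζ => sq_nonneg _) hsub.eventuallyLE)
  rw [integral_annulus f (by positivity)]
  refine mul_le_mul_of_nonneg_left ?_ (by positivity)
  rw [← intervalIntegral.integral_of_le (by linarith)]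
  calc (ε / 2) ^ 2 * (m ^ 2 / 2) * (ε / 8)
      ≤ (ε / 2) ^ 2 * (m ^ 2 / 2) * ∫ y in (ε / 2)..ε,
          (Real.cos (σ₃ * s * y) + Real.cos (σ₃ * s * y) ^ 2) := by
        refine mul_le_mul_of_nonneg_left ?_ (by positivity)
        refine le_trans ?_ (integral_cos_add_cos_sq_ge hl _ _)
        have h20 : 20 ≤ s * (ε * σ₃) := (div_le_iff₀ (by positivity)).1 ht2
        have : 5 / (2 * (σ₃ * s)) ≤ ε / 8 := by
          rw [div_le_div_iff₀ (by positivity) (by norm_num)]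
          nlinarith
        linarith
    _ = ∫ y in (ε / 2)..ε, (ε / 2) ^ 2 * (m ^ 2 / 2) *
          (Real.cos (σ₃ * s * y) + Real.cos (σ₃ * s * y) ^ 2) :=
        (intervalIntegral.integral_const_mul _ _).symm
    _ ≤ ∫ y in (ε / 2)..ε, y ^ 2 * f y := by
        refine intervalIntegral.integral_mono_on (by linarith)
          (Continuous.intervalIntegrable (by fun_prop) _ _)
          (Continuous.intervalIntegrable (by fun_prop) _ _) fun y hy => ?_
        have hma : m ≤ Real.exp (-σ₁ * y ^ 2) := by
          refine Real.exp_le_exp.2 ?_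
          have : y ^ 2 ≤ ε ^ 2 := pow_le_pow_left₀ (by linarith [hy.1]) hy.2 2
          nlinarith
        have hb := sq_add_mul_ge hmpos.le hma (Real.exp_pos (-σ₂ * y ^ 2)).le
          (Real.neg_one_le_cos (σ₃ * s * y)) (Real.cos_le_one _)
        have hfy : f y = (Real.exp (-σ₁ * y ^ 2)
            + Real.exp (-σ₂ * y ^ 2) * Real.cos (σ₃ * s * y)) ^ 2 := by
          simp only [f, mul_right_comm σ₃ y s]
        rw [← hfy] at hb
        have hy2 : (ε / 2) ^ 2 ≤ y ^ 2 := pow_le_pow_left₀ (by positivity) hy.1 2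
        calc _ = (ε / 2) ^ 2 * (m ^ 2 / 2 *
              (Real.cos (σ₃ * s * y) + Real.cos (σ₃ * s * y) ^ 2)) := by ring
          _ ≤ (ε / 2) ^ 2 * f y := mul_le_mul_of_nonneg_left hb (by positivity)
          _ ≤ y ^ 2 * f y := mul_le_mul_of_nonneg_right hy2 (sq_nonneg _)
end

section
/- For every ξ ∈ ℝ³ with ξ ≠ 0, the number −μ‖ξ‖² is an eigenvalue of A(ξ) of geometric multiplicity at least 2; that is, the kernel of the matrix A(ξ) + μ‖ξ‖²·I₅ has complex dimension at least 2. -/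
/-!
The eigenspace contains all vectors `(0, v, 0)` with `v ∈ ℂ³` and `ξ · v = 0`: each row of `A(ξ)`
acts on `(0, v, 0)` by a multiple of `ξ · v`, except for the scalar term `-μ‖ξ‖² v`. By rank-nullity,
the kernel of the functional `v ↦ ξ · v` has dimension at least `3 - 1 = 2`.
-/

noncomputable section

/-- The functional `v ↦ ξ · v` on `ℂ³`; it is bilinear (no conjugation). -/
def dotFunctional (ξ : EuclideanSpace ℝ (Fin 3)) : (Fin 3 → ℂ) →ₗ[ℂ] ℂ :=
  dotProductBilin ℂ ℂ (fun k => ((ξ k : ℝ) : ℂ))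

/-- The inclusion `v ↦ (0, v, 0)` of the velocity block `ℂ³` into `ℂ⁵`. -/
def velocityIncl : (Fin 3 → ℂ) →ₗ[ℂ] (Fin 5 → ℂ) where
  toFun v := ![0, v 0, v 1, v 2, 0]
  map_add' v w := by ext i; fin_cases i <;> simp
  map_smul' c v := by ext i; fin_cases i <;> simp

lemma velocityIncl_injective : Function.Injective velocityIncl := by
  intro v w h
  ext i
  fin_cases i
  · exact congrFun h 1
  · exact congrFun h 2
  · exact congrFun h 3

lemma two_le_finrank_ker_dotFunctional (ξ : EuclideanSpace ℝ (Fin 3)) :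
    2 ≤ Module.finrank ℂ (LinearMap.ker (dotFunctional ξ)) := by
  have h := (dotFunctional ξ).finrank_range_add_finrank_ker
  have h1 := (LinearMap.range (dotFunctional ξ)).finrank_le
  simp only [Module.finrank_self, Module.finrank_fin_fun] at h h1
  omega

/-- On transverse velocities (`ξ · v = 0`) every coupling term of `A(ξ)` vanishes and only the
diffusion `-μ‖ξ‖²` remains. -/
lemma velocityIncl_mem_ker (R Cv μ μ' κ : ℝ) (ξ : EuclideanSpace ℝ (Fin 3)) (v : Fin 3 → ℂ)
    (hv : v ∈ LinearMap.ker (dotFunctional ξ)) :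
    velocityIncl v ∈ LinearMap.ker (Matrix.toLin'
      (Amat R Cv μ μ' κ ξ + ((μ * ‖ξ‖ ^ 2 : ℝ) : ℂ) • (1 : Matrix (Fin 5) (Fin 5) ℂ))) := by
  have hv' : (ξ 0 : ℂ) * v 0 + (ξ 1 : ℂ) * v 1 + (ξ 2 : ℂ) * v 2 = 0 := by
    simpa [dotFunctional, dotProduct, Fin.sum_univ_three] using hv
  rw [LinearMap.mem_ker, Matrix.toLin'_apply, Matrix.add_mulVec, Matrix.smul_mulVec,
    Matrix.one_mulVec]
  ext i
  fin_cases i <;>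
    simp [Amat, velocityIncl]
  · linear_combination (-Complex.I * R) * hv'
  · linear_combination (-(μ + μ') * (ξ 0 : ℂ)) * hv'
  · linear_combination (-(μ + μ') * (ξ 1 : ℂ)) * hv'
  · linear_combination (-(μ + μ') * (ξ 2 : ℂ)) * hv'
  · linear_combination (-Complex.I * (R / Cv)) * hv'

/-- For `ξ ≠ 0`, `−μ‖ξ‖²` is an eigenvalue of `A(ξ)` of geometric multiplicity
at least `2`: the kernel of `A(ξ) + μ‖ξ‖² I₅` has complex dimension at least `2`. -/
theorem Amat_eigenvalue_multiplicity_two (R Cv μ μ' κ : ℝ) (hR : 0 < R) (hCv : 0 < Cv)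
    (hμ : 0 < μ) (hμ' : 0 < μ') (hκ : 0 ≤ κ)
    (ξ : EuclideanSpace ℝ (Fin 3)) (hξ : ξ ≠ 0) :
    2 ≤ Module.finrank ℂ
        (LinearMap.ker (Matrix.toLin'
          (Amat R Cv μ μ' κ ξ + ((μ * ‖ξ‖ ^ 2 : ℝ) : ℂ) • (1 : Matrix (Fin 5) (Fin 5) ℂ)))) := by
  refine (two_le_finrank_ker_dotFunctional ξ).trans ?_
  rw [(Submodule.equivMapOfInjective velocityIncl velocityIncl_injective
    (LinearMap.ker (dotFunctional ξ))).finrank_eq]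
  refine Submodule.finrank_mono ?_
  rintro _ ⟨v, hv, rfl⟩
  exact velocityIncl_mem_ker R Cv μ μ' κ ξ v hv

end
end
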